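/- arXiv:2106.15956 — 2 statements merged into one kernel-verified Lean document; each statement's English description precedes it below -/
import Mathlib

section
/- (i) For every w∈W^J and x∈ℝ^n: (Y_J(w)·x)(0)=0, (Y_J(w)·x)'(0)=x, L(Y_J(w)·x)=0∈F, and for every k∈K∖J, (Y_J(w)·x)(t)=0 for all t∈[−r,−d_k(w)]. (ii) For all w∈W^J, w̃∈F, and x∈ℝ^n: ((DY_J(w)w̃)·x)(0)=0, ((DY_J(w)w̃)·x)'(0)=0, and L((DY_J(w)w̃)·x)=0. (iii) For every w∈W^J, dim(Y_J(w)·ℝ^n)=n and C^1_n = X_0 ⊕ Y_J(w)·ℝ^n. (iv) For every φ∈U_J and x∈ℝ^n: φ + Y_J(Lφ)·x ∈ U_J and f(φ + Y_J(Lφ)·x) = f(φ). -/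
set_option linter.unusedSectionVars false

open Set

noncomputable section

/-- The compact interval `[-r,0]`. -/
abbrev Icc0 (r : ℝ) : Set ℝ := Set.Icc (-r) 0

/-- Extension of a continuous map on `[-r,0]` to `ℝ`, by the value `0` outside. -/
def extFun {r : ℝ} {E : Type*} [TopologicalSpace E] [Zero E] (φ : C(Icc0 r, E)) : ℝ → E :=
  fun t => if h : t ∈ Icc0 r then φ ⟨t, h⟩ else 0

section extlemmas

variable {r : ℝ} {E : Type*} [NormedAddCommGroup E] [NormedSpace ℝ E]

lemma extFun_add (φ ψ : C(Icc0 r, E)) : extFun (φ + ψ) = extFun φ + extFun ψ := by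
  funext t; by_cases h : t ∈ Icc0 r <;> simp [extFun, h]

lemma extFun_zero : extFun (0 : C(Icc0 r, E)) = 0 := by
  funext t; by_cases h : t ∈ Icc0 r <;> simp [extFun, h]

lemma extFun_smul (c : ℝ) (φ : C(Icc0 r, E)) : extFun (c • φ) = c • extFun φ := by
  funext t; by_cases h : t ∈ Icc0 r <;> simp [extFun, h]

end extlemmas

/-- The space `C¹([-r,0],E)`, realized as the closed subspace of pairs `(φ, φ')` in
`C([-r,0],E) × C([-r,0],E)` such that `φ` is differentiable on `[-r,0]` with derivative `φ'`. -/
def C1sub (r : ℝ) (E : Type*) [NormedAddCommGroup E] [NormedSpace ℝ E] :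
    Submodule ℝ (C(Icc0 r, E) × C(Icc0 r, E)) where
  carrier := {p | ∀ t ∈ Icc0 r, HasDerivWithinAt (extFun p.1) (extFun p.2 t) (Icc0 r) t}
  add_mem' := by
    intro p q hp hq t ht
    have h := (hp t ht).add (hq t ht)
    have e1 : extFun (p + q).1 = fun s => extFun p.1 s + extFun q.1 s := by
      simp [Prod.fst_add, extFun_add]; rfl
    have e2 : extFun (p + q).2 t = extFun p.2 t + extFun q.2 t := by
      simp [Prod.snd_add, extFun_add]
    rw [e1, e2]; exact h
  zero_mem' := by
    intro t ht
    have e1 : extFun (0 : C(Icc0 r, E) × C(Icc0 r, E)).1 = fun _ : ℝ => (0 : E) := by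
      simp [extFun_zero]; rfl
    have e2 : extFun (0 : C(Icc0 r, E) × C(Icc0 r, E)).2 t = 0 := by
      simp [extFun_zero]
    rw [e1, e2]; exact hasDerivWithinAt_const _ _ _
  smul_mem' := by
    intro c p hp t ht
    have h := (hp t ht).const_smul c
    have e1 : extFun (c • p).1 = fun s => c • extFun p.1 s := by
      simp [Prod.smul_fst, extFun_smul]; rfl
    have e2 : extFun (c • p).2 t = c • extFun p.2 t := by
      simp [Prod.smul_snd, extFun_smul]
    rw [e1, e2]; exact h

/-- The Banach space `C¹([-r,0],E)`. -/
abbrev C1 (r : ℝ) (E : Type*) [NormedAddCommGroup E] [NormedSpace ℝ E] := ↥(C1sub r E)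

section C1ops

variable {r : ℝ} {E : Type*} [NormedAddCommGroup E] [NormedSpace ℝ E]

/-- Evaluation `φ(t)` of `φ ∈ C¹([-r,0],E)` (extended by `0` outside `[-r,0]`). -/
def evC (φ : C1 r E) (t : ℝ) : E := extFun φ.1.1 t

/-- Evaluation `φ'(t)` of the derivative of `φ ∈ C¹([-r,0],E)`. -/
def dvC (φ : C1 r E) (t : ℝ) : E := extFun φ.1.2 t

end C1ops

/-- The continuous linear map `ℝ → (Fin n → ℝ)` sending `x` to the vector `x·e_ν`. -/
def sCLM (n : ℕ) (ν : Fin n) : ℝ →L[ℝ] (Fin n → ℝ) :=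
  ContinuousLinearMap.pi (fun j => if j = ν then ContinuousLinearMap.id ℝ ℝ else 0)

/-- `ψ · e_ν` for a continuous map `ψ`. -/
def CMsingle {r : ℝ} {n : ℕ} (ν : Fin n) (φ : C(Icc0 r, ℝ)) : C(Icc0 r, Fin n → ℝ) :=
  ⟨fun t => sCLM n ν (φ t), (sCLM n ν).continuous.comp φ.continuous⟩

lemma extFun_CMsingle {r : ℝ} {n : ℕ} (ν : Fin n) (φ : C(Icc0 r, ℝ)) (t : ℝ) :
    extFun (CMsingle ν φ) t = sCLM n ν (extFun φ t) := by
  by_cases h : t ∈ Icc0 r <;> simp [extFun, CMsingle, h]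

/-- `ψ · e_ν ∈ C¹([-r,0],ℝⁿ)` for a scalar function `ψ ∈ C¹([-r,0],ℝ)`. -/
def singleC1 {r : ℝ} {n : ℕ} (ν : Fin n) (φ : C1 r ℝ) : C1 r (Fin n → ℝ) :=
  ⟨(CMsingle ν φ.1.1, CMsingle ν φ.1.2), by
    intro t ht
    have h := ((sCLM n ν).hasFDerivAt).comp_hasDerivWithinAt t (φ.2 t ht)
    have e1 : extFun (CMsingle ν φ.1.1) = (sCLM n ν) ∘ (extFun φ.1.1) := by
      funext s; exact extFun_CMsingle ν φ.1.1 s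
    rw [show (CMsingle ν φ.1.1, CMsingle ν φ.1.2).1 = CMsingle ν φ.1.1 from rfl,
      show (CMsingle ν φ.1.1, CMsingle ν φ.1.2).2 = CMsingle ν φ.1.2 from rfl,
      e1, extFun_CMsingle]
    exact h⟩

/-- The linear map `ℝⁿ → C¹([-r,0],ℝⁿ)`, `x ↦ Σ_ν x_ν ψ_ν · e_ν` (the map `Y·x`). -/
def Ymap {r : ℝ} {n : ℕ} (ψ : Fin n → C1 r ℝ) : (Fin n → ℝ) →ₗ[ℝ] C1 r (Fin n → ℝ) where
  toFun x := ∑ ν, x ν • singleC1 ν (ψ ν)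
  map_add' x y := by simp [add_smul, Finset.sum_add_distrib]
  map_smul' c x := by simp [smul_smul, Finset.smul_sum]

/-- The closed subspace `X₀ = {φ ∈ C¹ : φ'(0) = 0}`. -/
def X0sub (r : ℝ) (n : ℕ) : Submodule ℝ (C1 r (Fin n → ℝ)) where
  carrier := {φ | dvC φ 0 = 0}
  add_mem' := by
    intro φ ψ hφ hψ
    have : dvC (φ + ψ) 0 = dvC φ 0 + dvC ψ 0 := by
      simp [dvC, extFun_add]
    rw [Set.mem_setOf_eq] at *
    rw [this, hφ, hψ, add_zero]
  zero_mem' := by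
    show dvC (0 : C1 r (Fin n → ℝ)) 0 = 0
    simp [dvC, extFun_zero]
  smul_mem' := by
    intro c φ hφ
    have : dvC (c • φ) 0 = c • dvC φ 0 := by simp [dvC, extFun_smul]
    rw [Set.mem_setOf_eq] at *
    rw [this, hφ, smul_zero]

/-- The projection-like map `R φ = φ − Y·φ'(0)`. -/
def RKmap {r : ℝ} {n : ℕ} (ψ : Fin n → C1 r ℝ) (φ : C1 r (Fin n → ℝ)) : C1 r (Fin n → ℝ) :=
  φ - Ymap ψ (dvC φ 0)

section diffeos

variable {E : Type*} [NormedAddCommGroup E] [NormedSpace ℝ E]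
variable {E' : Type*} [NormedAddCommGroup E'] [NormedSpace ℝ E']

/-- `f` defines a `C¹`-diffeomorphism from `s` onto `t`: `f` is continuously differentiable
on `s`, injective on `s`, maps `s` onto `t`, and has a continuously differentiable inverse. -/
def IsC1DiffeoOn (f : E → E') (s : Set E) (t : Set E') : Prop :=
  ContDiffOn ℝ 1 f s ∧ Set.InjOn f s ∧ f '' s = t ∧
    ∃ g : E' → E, ContDiffOn ℝ 1 g t ∧ Set.InvOn g f s t

/-- The tangent cone of `X ⊆ E` at `x`: all velocities `c'(0)` of continuously differentiable
curves in `X` through `x`. -/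
def tangentSet (X : Set E) (x : E) : Set E :=
  {v | ∃ (c : ℝ → E) (ε : ℝ), 0 < ε ∧ ContDiffOn ℝ 1 c (Set.Ioo (-ε) ε) ∧
      (∀ s ∈ Set.Ioo (-ε) ε, c s ∈ X) ∧ c 0 = x ∧ HasDerivWithinAt c v (Set.Ioo (-ε) ε) 0}

/-- `X` is a continuously differentiable submanifold of codimension `m` of `E`. -/
def IsC1SubmanifoldCodim (X : Set E) (m : ℕ) : Prop :=
  ∀ x ∈ X, ∃ (O : Set E) (Φ : E → E) (H Q : Submodule ℝ E),
    IsOpen O ∧ x ∈ O ∧ IsClosed (H : Set E) ∧ IsCompl H Q ∧ Module.finrank ℝ Q = m ∧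
    IsOpen (Φ '' O) ∧ IsC1DiffeoOn Φ O (Φ '' O) ∧ Φ '' (X ∩ O) = (H : Set E) ∩ (Φ '' O)

/-- `X` is a continuously differentiable submanifold of `E`. -/
def IsC1Submanifold (X : Set E) : Prop :=
  ∀ x ∈ X, ∃ (O : Set E) (Φ : E → E) (H : Submodule ℝ E),
    IsOpen O ∧ x ∈ O ∧ IsClosed (H : Set E) ∧
    IsOpen (Φ '' O) ∧ IsC1DiffeoOn Φ O (Φ '' O) ∧ Φ '' (X ∩ O) = (H : Set E) ∩ (Φ '' O)

/-- `A` is an almost graph over `H`. -/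
def IsAlmostGraphOver (A : Set E) (H : Set E) : Prop :=
  ∃ (dm : Set E) (α : E → E), dm ⊆ H ∧ ContDiffOn ℝ 1 α dm ∧
    (∀ ζ ∈ dm ∩ A, α ζ = 0) ∧ (∀ ζ ∈ dm \ A, α ζ ∉ H) ∧
    IsC1DiffeoOn (fun ζ => ζ + α ζ) dm A

end diffeos

/-- The data of the delay differential system
`x'(t) = g(x(t-d_1(Lx_t)),…,x(t-d_kk(Lx_t)))`. -/
structure Setting (r : ℝ) (n kk : ℕ) (F : Type*) [NormedAddCommGroup F] [NormedSpace ℝ F] where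
  /-- The continuous linear map `L : C([-r,0],ℝⁿ) → F`. -/
  L : C(Icc0 r, Fin n → ℝ) →L[ℝ] F
  /-- The open set `W ⊆ F`. -/
  W : Set F
  Wopen : IsOpen W
  /-- The delay functions `d_k : W → [0,r]`. -/
  d : Fin kk → F → ℝ
  d_smooth : ∀ k, ContDiffOn ℝ 1 (d k) W
  d_mem : ∀ k, ∀ w ∈ W, d k w ∈ Set.Icc (0:ℝ) r
  /-- The open set `V ⊆ (ℝⁿ)^kk`. -/
  V : Set (Fin kk → Fin n → ℝ)
  Vopen : IsOpen V
  /-- The right hand side function `g : V → ℝⁿ`. -/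
  g : (Fin kk → Fin n → ℝ) → Fin n → ℝ
  g_smooth : ContDiffOn ℝ 1 g V

namespace Setting

variable {r : ℝ} {n kk : ℕ} {F : Type*} [NormedAddCommGroup F] [NormedSpace ℝ F]
variable (S : Setting r n kk F)

/-- `L` applied to (the `C⁰`-part of) `φ ∈ C¹`. -/
def Lof (φ : C1 r (Fin n → ℝ)) : F := S.L φ.1.1

/-- `φ̂ = (φ(-d_1(Lφ)),…,φ(-d_kk(Lφ)))`. -/
def hat (φ : C1 r (Fin n → ℝ)) : Fin kk → Fin n → ℝ := fun k => evC φ (-(S.d k (S.Lof φ)))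

/-- The domain `U = {φ ∈ C¹ : Lφ ∈ W, φ̂ ∈ V}`. -/
def U : Set (C1 r (Fin n → ℝ)) := {φ | S.Lof φ ∈ S.W ∧ S.hat φ ∈ S.V}

/-- The right hand side `f(φ) = g(φ̂)`. -/
def fmap (φ : C1 r (Fin n → ℝ)) : Fin n → ℝ := S.g (S.hat φ)

/-- The solution manifold `X_f = {φ ∈ U : φ'(0) = f(φ)}`. -/
def Xf : Set (C1 r (Fin n → ℝ)) := {φ | φ ∈ S.U ∧ dvC φ 0 = S.fmap φ}

/-- `W_J = {w ∈ W : d_j(w)=0 for j∈J, d_k(w)>0 for k∉J}`. -/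
def WJ (J : Finset (Fin kk)) : Set F :=
  {w | w ∈ S.W ∧ (∀ j ∈ J, S.d j w = 0) ∧ ∀ k ∉ J, 0 < S.d k w}

/-- `W^J = {w ∈ W : d_k(w)>0 for k∉J}`. -/
def WupJ (J : Finset (Fin kk)) : Set F :=
  {w | w ∈ S.W ∧ ∀ k ∉ J, 0 < S.d k w}

/-- `U_J = U ∩ L⁻¹(W_J)`. -/
def UJ (J : Finset (Fin kk)) : Set (C1 r (Fin n → ℝ)) := {φ | φ ∈ S.U ∧ S.Lof φ ∈ S.WJ J}

/-- `U^J = U ∩ L⁻¹(W^J)`. -/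
def UupJ (J : Finset (Fin kk)) : Set (C1 r (Fin n → ℝ)) := {φ | φ ∈ S.U ∧ S.Lof φ ∈ S.WupJ J}

/-- `X_{fJ} = X_f ∩ U_J`. -/
def XfJ (J : Finset (Fin kk)) : Set (C1 r (Fin n → ℝ)) := S.Xf ∩ S.UJ J

/-- Hypothesis (b): `g` is bounded. -/
def HypB : Prop := ∃ M, ∀ v ∈ S.V, ‖S.g v‖ ≤ M

/-- Hypothesis (d1b): `d₁ = 0` on `W` and `g` is bounded on subsets of `V` with bounded
first component. -/
def HypD1B (hk : 0 < kk) : Prop :=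
  (∀ w ∈ S.W, S.d ⟨0, hk⟩ w = 0) ∧
  ∀ B : Set (Fin n → ℝ), Bornology.IsBounded B →
    Bornology.IsBounded (S.g '' {v | v ∈ S.V ∧ v ⟨0, hk⟩ ∈ B})

/-- The partial derivative `∂_{(k-1)n+ν} g_μ (φ̂)`. -/
def dgCoeff (φ : C1 r (Fin n → ℝ)) (k : Fin kk) (ν : Fin n) (μ : Fin n) : ℝ :=
  fderivWithin ℝ S.g S.V (S.hat φ) (Pi.single k (Pi.single ν 1)) μ

/-- The right hand side of the formula for `Df_μ(φ)χ`. -/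
def dFormula (φ χ : C1 r (Fin n → ℝ)) (μ : Fin n) : ℝ :=
  ∑ k, ∑ ν, S.dgCoeff φ k ν μ *
    (evC χ (-(S.d k (S.Lof φ))) ν -
      dvC φ (-(S.d k (S.Lof φ))) ν * fderivWithin ℝ (S.d k) S.W (S.Lof φ) (S.Lof χ))

/-- The map `R^J(φ) = φ − Y_J(Lφ)·φ'(0)` of Section 4 of the paper. -/
def RJmap (y : Fin n → F → C1 r ℝ) (φ : C1 r (Fin n → ℝ)) : C1 r (Fin n → ℝ) :=
  φ - Ymap (fun ν => y ν (S.Lof φ)) (dvC φ 0)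

end Setting


section helpers10

variable {r : ℝ} {n : ℕ}

lemma zero_mem_Icc0 (hr : 0 < r) : (0 : ℝ) ∈ Icc0 r := ⟨by linarith, le_refl _⟩

def evCLM {E : Type*} [NormedAddCommGroup E] [NormedSpace ℝ E] (hr : 0 < r) : C1 r E →L[ℝ] E :=
  (ContinuousMap.evalCLM ℝ (⟨0, zero_mem_Icc0 hr⟩ : Icc0 r)).comp
    ((ContinuousLinearMap.fst ℝ _ _).comp (C1sub r E).subtypeL)

def dvCLM {E : Type*} [NormedAddCommGroup E] [NormedSpace ℝ E] (hr : 0 < r) : C1 r E →L[ℝ] E :=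
  (ContinuousMap.evalCLM ℝ (⟨0, zero_mem_Icc0 hr⟩ : Icc0 r)).comp
    ((ContinuousLinearMap.snd ℝ _ _).comp (C1sub r E).subtypeL)

lemma evCLM_apply {E : Type*} [NormedAddCommGroup E] [NormedSpace ℝ E] (hr : 0 < r) (φ : C1 r E) :
    evCLM hr φ = evC φ 0 := by
  simp [evCLM, evC, extFun, zero_mem_Icc0 hr, hr.le]

lemma dvCLM_apply {E : Type*} [NormedAddCommGroup E] [NormedSpace ℝ E] (hr : 0 < r) (φ : C1 r E) :
    dvCLM hr φ = dvC φ 0 := by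
  simp [dvCLM, dvC, extFun, zero_mem_Icc0 hr, hr.le]

lemma evC_add {E : Type*} [NormedAddCommGroup E] [NormedSpace ℝ E] (φ ψ : C1 r E) (t : ℝ) :
    evC (φ + ψ) t = evC φ t + evC ψ t := by simp [evC, extFun_add]

lemma dvC_add {E : Type*} [NormedAddCommGroup E] [NormedSpace ℝ E] (φ ψ : C1 r E) (t : ℝ) :
    dvC (φ + ψ) t = dvC φ t + dvC ψ t := by simp [dvC, extFun_add]

def evLin {E : Type*} [NormedAddCommGroup E] [NormedSpace ℝ E] (t : ℝ) : C1 r E →ₗ[ℝ] E where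
  toFun φ := evC φ t
  map_add' φ ψ := evC_add φ ψ t
  map_smul' c φ := by simp [evC, extFun_smul]

def dvLin {E : Type*} [NormedAddCommGroup E] [NormedSpace ℝ E] (t : ℝ) : C1 r E →ₗ[ℝ] E where
  toFun φ := dvC φ t
  map_add' φ ψ := dvC_add φ ψ t
  map_smul' c φ := by simp [dvC, extFun_smul]

lemma evC_Ymap (ψ : Fin n → C1 r ℝ) (x : Fin n → ℝ) (t : ℝ) :
    evC (Ymap ψ x) t = fun ν => x ν * evC (ψ ν) t := by
  have h : evLin t (Ymap ψ x) = ∑ ν, x ν • evLin t (singleC1 ν (ψ ν)) := by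
    simp [Ymap]
  have h2 : ∀ ν, evLin t (singleC1 ν (ψ ν)) = sCLM n ν (evC (ψ ν) t) :=
    fun ν => extFun_CMsingle ν _ t
  change evLin t (Ymap ψ x) = _
  rw [h]
  ext j
  simp only [h2, Finset.sum_apply, Pi.smul_apply, smul_eq_mul]
  rw [Finset.sum_eq_single j]
  · simp [sCLM]
  · intro b _ hb
    simp [sCLM, hb.symm]
  · simp

lemma dvC_Ymap (ψ : Fin n → C1 r ℝ) (x : Fin n → ℝ) (t : ℝ) :
    dvC (Ymap ψ x) t = fun ν => x ν * dvC (ψ ν) t := by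
  have h : dvLin t (Ymap ψ x) = ∑ ν, x ν • dvLin t (singleC1 ν (ψ ν)) := by
    simp [Ymap]
  have h2 : ∀ ν, dvLin t (singleC1 ν (ψ ν)) = sCLM n ν (dvC (ψ ν) t) :=
    fun ν => extFun_CMsingle ν _ t
  change dvLin t (Ymap ψ x) = _
  rw [h]
  ext j
  simp only [h2, Finset.sum_apply, Pi.smul_apply, smul_eq_mul]
  rw [Finset.sum_eq_single j]
  · simp [sCLM]
  · intro b _ hb
    simp [sCLM, hb.symm]
  · simp

lemma fderivWithin_comp_const {A B G : Type*} [NormedAddCommGroup A] [NormedSpace ℝ A]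
    [NormedAddCommGroup B] [NormedSpace ℝ B] [NormedAddCommGroup G] [NormedSpace ℝ G]
    (T : B →L[ℝ] G) (h : A → B) (s : Set A) (hs : IsOpen s) (c : G)
    (hc : ∀ a ∈ s, T (h a) = c) (w : A) (hw : w ∈ s) (v : A) :
    T (fderivWithin ℝ h s w v) = 0 := by
  by_cases hd : DifferentiableWithinAt ℝ h s w
  · have h1 := T.hasFDerivAt.comp_hasFDerivWithinAt w hd.hasFDerivWithinAt
    have h2 : HasFDerivWithinAt (T ∘ h) (0 : A →L[ℝ] G) s w :=
      (hasFDerivWithinAt_const c w s).congr (fun a ha => hc a ha) (hc w hw)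
    have h3 := (hs.uniqueDiffWithinAt hw).eq h1 h2
    simpa using congrArg (fun l => l v) h3
  · rw [fderivWithin_zero_of_not_differentiableWithinAt hd]; simp

end helpers10

lemma Setting.isOpen_WupJ {r : ℝ} {n kk : ℕ} {F : Type*} [NormedAddCommGroup F] [NormedSpace ℝ F]
    (S : Setting r n kk F) (J : Finset (Fin kk)) : IsOpen (S.WupJ J) := by
  have h : S.WupJ J = S.W ∩ ⋂ k : Fin kk, ⋂ (_ : k ∉ J), (S.W ∩ S.d k ⁻¹' Set.Ioi 0) := by
    ext w
    simp only [Set.mem_inter_iff, Set.mem_iInter, Set.mem_preimage,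
      Set.mem_Ioi]
    exact ⟨fun h => ⟨h.1, fun k hk => ⟨h.1, h.2 k hk⟩⟩, fun h => ⟨h.1, fun k hk => (h.2 k hk).2⟩⟩
  rw [h]
  refine S.Wopen.inter (isOpen_iInter_of_finite fun k => isOpen_iInter_of_finite fun _ => ?_)
  exact (S.d_smooth k).continuousOn.isOpen_inter_preimage S.Wopen isOpen_Ioi

def Setting.LCLM {r : ℝ} {n kk : ℕ} {F : Type*} [NormedAddCommGroup F] [NormedSpace ℝ F]
    (S : Setting r n kk F) : C1 r (Fin n → ℝ) →L[ℝ] F :=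
  S.L.comp ((ContinuousLinearMap.fst ℝ _ _).comp (C1sub r (Fin n → ℝ)).subtypeL)

lemma Setting.LCLM_apply {r : ℝ} {n kk : ℕ} {F : Type*} [NormedAddCommGroup F] [NormedSpace ℝ F]
    (S : Setting r n kk F) (φ : C1 r (Fin n → ℝ)) : S.LCLM φ = S.Lof φ := rfl


variable {r : ℝ} {n kk : ℕ} {F : Type*} [NormedAddCommGroup F] [NormedSpace ℝ F]
  [FiniteDimensional ℝ F]

/-- Proposition 4.2. -/
theorem statement10 (hr : 0 < r) (S : Setting r n kk F)
    (J : Finset (Fin kk)) (hJ : J ≠ Finset.univ) (hUJ : (S.UJ J).Nonempty)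
    (y : Fin n → F → C1 r ℝ)
    (hy_smooth : ∀ ν, ContDiffOn ℝ 1 (y ν) (S.WupJ J))
    (hy0 : ∀ ν, ∀ w ∈ S.WupJ J, evC (y ν w) 0 = 0)
    (hy1 : ∀ ν, ∀ w ∈ S.WupJ J, dvC (y ν w) 0 = 1)
    (hyL : ∀ ν, ∀ w ∈ S.WupJ J, S.L (singleC1 ν (y ν w)).1.1 = 0)
    (hyvan : ∀ ν, ∀ w ∈ S.WupJ J, ∀ k ∉ J, ∀ t ∈ Set.Icc (-r) (-(S.d k w)),
      evC (y ν w) t = 0) :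
    (∀ w ∈ S.WupJ J, ∀ x : Fin n → ℝ,
      evC (Ymap (fun ν => y ν w) x) 0 = 0 ∧
      dvC (Ymap (fun ν => y ν w) x) 0 = x ∧
      S.Lof (Ymap (fun ν => y ν w) x) = 0 ∧
      ∀ k ∉ J, ∀ t ∈ Set.Icc (-r) (-(S.d k w)), evC (Ymap (fun ν => y ν w) x) t = 0) ∧
    (∀ w ∈ S.WupJ J, ∀ wt : F, ∀ x : Fin n → ℝ,
      evC (fderivWithin ℝ (fun w' => (Ymap (fun ν => y ν w') x : C1 r (Fin n → ℝ)))
        (S.WupJ J) w wt) 0 = 0 ∧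
      dvC (fderivWithin ℝ (fun w' => (Ymap (fun ν => y ν w') x : C1 r (Fin n → ℝ)))
        (S.WupJ J) w wt) 0 = 0 ∧
      S.Lof (fderivWithin ℝ (fun w' => (Ymap (fun ν => y ν w') x : C1 r (Fin n → ℝ)))
        (S.WupJ J) w wt) = 0) ∧
    (∀ w ∈ S.WupJ J,
      Module.finrank ℝ ↥(LinearMap.range (Ymap (fun ν => y ν w))) = n ∧
      IsCompl (X0sub r n) (LinearMap.range (Ymap (fun ν => y ν w)))) ∧
    (∀ φ ∈ S.UJ J, ∀ x : Fin n → ℝ,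
      φ + Ymap (fun ν => y ν (S.Lof φ)) x ∈ S.UJ J ∧
      S.fmap (φ + Ymap (fun ν => y ν (S.Lof φ)) x) = S.fmap φ) := by
  have H1 : ∀ w ∈ S.WupJ J, ∀ x : Fin n → ℝ,
      evC (Ymap (fun ν => y ν w) x) 0 = 0 ∧
      dvC (Ymap (fun ν => y ν w) x) 0 = x ∧
      S.Lof (Ymap (fun ν => y ν w) x) = 0 ∧
      ∀ k ∉ J, ∀ t ∈ Set.Icc (-r) (-(S.d k w)), evC (Ymap (fun ν => y ν w) x) t = 0 := by
    intro w hw x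
    refine ⟨?_, ?_, ?_, ?_⟩
    · rw [evC_Ymap]; funext ν; simp [hy0 ν w hw]
    · rw [dvC_Ymap]; funext ν; simp [hy1 ν w hw]
    · rw [← S.LCLM_apply]
      have h : S.LCLM (Ymap (fun ν => y ν w) x) = ∑ ν, x ν • S.LCLM (singleC1 ν (y ν w)) := by
        simp [Ymap]
      rw [h]
      refine Finset.sum_eq_zero fun ν _ => ?_
      have h2 : S.LCLM (singleC1 ν (y ν w)) = 0 := hyL ν w hw
      rw [h2, smul_zero]
    · intro k hk t ht
      rw [evC_Ymap]; funext ν; simp [hyvan ν w hw k hk t ht]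
  have hO := S.isOpen_WupJ J
  refine ⟨H1, ?_, ?_, ?_⟩
  · intro w hw wt x
    refine ⟨?_, ?_, ?_⟩
    · have hc : ∀ a ∈ S.WupJ J, (evCLM hr) (Ymap (fun ν => y ν a) x) = 0 := fun a ha =>
        (evCLM_apply hr _).trans (H1 a ha x).1
      exact (evCLM_apply hr _).symm.trans (fderivWithin_comp_const (evCLM hr)
        (fun w' => (Ymap (fun ν => y ν w') x : C1 r (Fin n → ℝ))) _ hO 0 hc w hw wt)
    · have hc : ∀ a ∈ S.WupJ J, (dvCLM hr) (Ymap (fun ν => y ν a) x) = x := fun a ha =>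
        (dvCLM_apply hr _).trans (H1 a ha x).2.1
      exact (dvCLM_apply hr _).symm.trans (fderivWithin_comp_const (dvCLM hr)
        (fun w' => (Ymap (fun ν => y ν w') x : C1 r (Fin n → ℝ))) _ hO x hc w hw wt)
    · have hc : ∀ a ∈ S.WupJ J, (S.LCLM) (Ymap (fun ν => y ν a) x) = 0 := fun a ha =>
        (S.LCLM_apply _).trans (H1 a ha x).2.2.1
      exact (S.LCLM_apply _).symm.trans (fderivWithin_comp_const (S.LCLM)
        (fun w' => (Ymap (fun ν => y ν w') x : C1 r (Fin n → ℝ))) _ hO 0 hc w hw wt)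
  · intro w hw
    have hinj : Function.Injective (Ymap (fun ν => y ν w)) := by
      intro a b hab
      rw [← (H1 w hw a).2.1, hab, (H1 w hw b).2.1]
    refine ⟨?_, ?_⟩
    · rw [LinearMap.finrank_range_of_inj hinj]; simp
    · constructor
      · rw [Submodule.disjoint_def]
        rintro φ h0 ⟨x, rfl⟩
        have h0' : dvC (Ymap (fun ν => y ν w) x) 0 = 0 := h0
        rw [(H1 w hw x).2.1] at h0'
        rw [h0', map_zero]
      · rw [codisjoint_iff, Submodule.eq_top_iff']
        intro φ
        rw [Submodule.mem_sup]
        refine ⟨φ - Ymap (fun ν => y ν w) (dvC φ 0), ?_, Ymap (fun ν => y ν w) (dvC φ 0),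
          ⟨_, rfl⟩, sub_add_cancel _ _⟩
        change dvC (φ - Ymap (fun ν => y ν w) (dvC φ 0)) 0 = 0
        rw [← dvCLM_apply hr, map_sub, dvCLM_apply, dvCLM_apply, (H1 w hw _).2.1, sub_self]
  · intro φ hφ x
    have hW : S.Lof φ ∈ S.WJ J := hφ.2
    have hw : S.Lof φ ∈ S.WupJ J := ⟨hW.1, hW.2.2⟩
    obtain ⟨h0, -, hL, hv⟩ := H1 _ hw x
    have hLe : S.Lof (φ + Ymap (fun ν => y ν (S.Lof φ)) x) = S.Lof φ := by
      rw [← S.LCLM_apply, map_add, S.LCLM_apply, S.LCLM_apply, hL, add_zero]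
    have hhat : S.hat (φ + Ymap (fun ν => y ν (S.Lof φ)) x) = S.hat φ := by
      funext k
      simp only [Setting.hat]
      rw [hLe, evC_add]
      by_cases hk : k ∈ J
      · rw [hW.2.1 k hk, neg_zero, h0, add_zero]
      · rw [hv k hk _ ⟨neg_le_neg (S.d_mem k _ hW.1).2, le_refl _⟩, add_zero]
    refine ⟨⟨⟨?_, ?_⟩, ?_⟩, ?_⟩
    · rw [hLe]; exact hφ.1.1
    · rw [hhat]; exact hφ.1.2
    · rw [hLe]; exact hW
    · simp only [Setting.fmap, hhat]
end
end

section
/- The restriction of R^J to X_{fJ} is injective, and for every φ∈X_{fJ} the derivative DR^J(φ) defines a (topological) isomorphism from the tangent space T_φX_f onto X_0. -/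
set_option linter.unusedSectionVars false

open Set

noncomputable section

section Helpers

open Topology Filter

/-- An abstract normed space of `C¹` maps on `[-r,0]`. -/
structure EvS (r : ℝ) (X E : Type*) [NormedAddCommGroup X] [NormedSpace ℝ X]
    [NormedAddCommGroup E] [NormedSpace ℝ E] where
  ev : ℝ → X → E
  dv : ℝ → X → E
  ev_add : ∀ t φ ψ, ev t (φ + ψ) = ev t φ + ev t ψ
  ev_smul : ∀ t (c : ℝ) φ, ev t (c • φ) = c • ev t φ
  dv_add : ∀ t φ ψ, dv t (φ + ψ) = dv t φ + dv t ψ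
  dv_smul : ∀ t (c : ℝ) φ, dv t (c • φ) = c • dv t φ
  ev_bd : ∀ t φ, ‖ev t φ‖ ≤ ‖φ‖
  dv_bd : ∀ t φ, ‖dv t φ‖ ≤ ‖φ‖
  hder : ∀ φ, ∀ t ∈ Icc0 r, HasDerivWithinAt (fun s => ev s φ) (dv t φ) (Icc0 r) t
  dv_cont : ∀ φ, ContinuousOn (fun t => dv t φ) (Icc0 r)

namespace EvS
variable {r : ℝ} {X E : Type*} [NormedAddCommGroup X] [NormedSpace ℝ X]
    [NormedAddCommGroup E] [NormedSpace ℝ E] (P : EvS r X E)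

/-- evaluation as a continuous linear map -/
def evL (t : ℝ) : X →L[ℝ] E :=
  LinearMap.mkContinuous
    { toFun := P.ev t
      map_add' := P.ev_add t
      map_smul' := P.ev_smul t } 1
    (by intro φ; rw [one_mul]; exact P.ev_bd t φ)

/-- evaluation of the derivative as a continuous linear map -/
def dvL (t : ℝ) : X →L[ℝ] E :=
  LinearMap.mkContinuous
    { toFun := P.dv t
      map_add' := P.dv_add t
      map_smul' := P.dv_smul t } 1
    (by intro φ; rw [one_mul]; exact P.dv_bd t φ)

lemma evL_apply (t : ℝ) (φ : X) : P.evL t φ = P.ev t φ := rfl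
lemma dvL_apply (t : ℝ) (φ : X) : P.dvL t φ = P.dv t φ := rfl

lemma ev_lip (φ : X) {s t : ℝ} (hs : s ∈ Icc0 r) (ht : t ∈ Icc0 r) :
    ‖P.ev t φ - P.ev s φ‖ ≤ ‖φ‖ * ‖t - s‖ :=
  (convex_Icc (-r) 0).norm_image_sub_le_of_norm_hasDerivWithin_le
    (fun x hx => P.hder φ x hx) (fun x _ => P.dv_bd x φ) hs ht

lemma dv_contOn : ContinuousOn (fun p : X × ℝ => P.dv p.2 p.1) (univ ×ˢ Icc0 r) := by
  intro p hp
  have h1 : ContinuousWithinAt (fun q : X × ℝ => P.dv q.2 p.1) (univ ×ˢ Icc0 r) p :=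
    ContinuousWithinAt.comp (t := Icc0 r) (P.dv_cont p.1 p.2 hp.2)
      continuous_snd.continuousWithinAt (fun q hq => hq.2)
  have h2 : Tendsto (fun q : X × ℝ => P.dv q.2 (q.1 - p.1)) (𝓝[univ ×ˢ Icc0 r] p) (𝓝 0) := by
    have hc : Continuous (fun q : X × ℝ => ‖q.1 - p.1‖) := by fun_prop
    have h0 := (hc.tendsto p).mono_left (nhdsWithin_le_nhds (s := univ ×ˢ Icc0 r))
    simp only [sub_self, norm_zero] at h0
    exact squeeze_zero_norm (fun q => P.dv_bd _ _) h0
  have h3 := h2.add h1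
  rw [zero_add] at h3
  refine h3.congr ?_
  intro q
  rw [← P.dv_add, sub_add_cancel]

/-- derivative of the evaluation map -/
def evD (p : X × ℝ) : X × ℝ →L[ℝ] E :=
  (P.evL p.2).comp (ContinuousLinearMap.fst ℝ X ℝ) +
    (ContinuousLinearMap.snd ℝ X ℝ).smulRight (P.dv p.2 p.1)

lemma evD_apply (p q : X × ℝ) : P.evD p q = P.ev p.2 q.1 + q.2 • P.dv p.2 p.1 := rfl

lemma ev_hasFDeriv (p : X × ℝ) (hp : p.2 ∈ Icc0 r) :
    HasFDerivWithinAt (fun p : X × ℝ => P.ev p.2 p.1) (P.evD p) (univ ×ˢ Icc0 r) p := by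
  have h1 : HasFDerivWithinAt (fun q : X × ℝ => P.ev q.2 p.1)
      ((ContinuousLinearMap.snd ℝ (X) ℝ).smulRight (P.dv p.2 p.1)) (univ ×ˢ Icc0 r) p := by
    have := (P.hder p.1 p.2 hp).hasFDerivWithinAt.comp p
      (hasFDerivWithinAt_snd (s := univ ×ˢ Icc0 r)) (fun q hq => hq.2)
    exact this
  have h2 : HasFDerivWithinAt (fun q : X × ℝ => P.ev p.2 (q.1 - p.1))
      ((P.evL p.2).comp (ContinuousLinearMap.fst ℝ _ _)) (univ ×ˢ Icc0 r) p := by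
    have := ((P.evL p.2).hasFDerivAt.comp p
      ((hasFDerivAt_fst (𝕜 := ℝ) (p := p)).sub_const p.1)).hasFDerivWithinAt (s := univ ×ˢ Icc0 r)
    exact this
  have h3 : HasFDerivWithinAt (fun q : X × ℝ => P.ev q.2 (q.1 - p.1) - P.ev p.2 (q.1 - p.1))
      (0 : X × ℝ →L[ℝ] E) (univ ×ˢ Icc0 r) p := by
    rw [hasFDerivWithinAt_iff_isLittleO]
    have hz : (fun q : X × ℝ => ‖q - p‖ * ‖q - p‖) =o[𝓝[univ ×ˢ Icc0 r] p]
        (fun q => q - p) := by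
      have : Tendsto (fun q : X × ℝ => ‖q - p‖) (𝓝[univ ×ˢ Icc0 r] p) (𝓝 0) := by
        have hc : Continuous (fun q : X × ℝ => ‖q - p‖) := by fun_prop
        have := hc.tendsto p
        simp only [sub_self, norm_zero] at this
        exact this.mono_left nhdsWithin_le_nhds
      have h := ((Asymptotics.isLittleO_one_iff ℝ).2 this).mul_isBigO
        (Asymptotics.isBigO_refl (fun q : X × ℝ => ‖q - p‖) (𝓝[univ ×ˢ Icc0 r] p))
      simp only [one_mul] at h
      exact h.of_norm_right
    refine Asymptotics.IsBigO.trans_isLittleO ?_ hz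
    refine Asymptotics.IsBigO.of_bound 1 ?_
    filter_upwards [self_mem_nhdsWithin] with q hq
    have := P.ev_lip (q.1 - p.1) hp hq.2
    simp only [sub_self, _root_.zero_apply, sub_zero]
    rw [one_mul, norm_mul, norm_norm]
    refine this.trans ?_
    exact mul_le_mul (norm_fst_le (q - p)) (norm_snd_le (q - p)) (norm_nonneg _) (norm_nonneg _)
  have h := (h2.add h1).add h3
  rw [add_zero] at h
  refine HasFDerivWithinAt.congr' h ?_ ⟨mem_univ _, hp⟩
  intro q _
  have : P.ev q.2 q.1 = P.ev q.2 (q.1 - p.1) + P.ev q.2 p.1 := by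
    rw [← P.evL_apply, ← P.evL_apply, ← P.evL_apply, map_sub]; abel
  simp only [Pi.add_apply]
  rw [this]; abel

lemma evL_contOn : ContinuousOn (P.evL) (Icc0 r) := by
  have : LipschitzOnWith 1 (P.evL) (Icc0 r) := by
    refine LipschitzOnWith.of_dist_le_mul ?_
    intro s hs t ht
    rw [dist_eq_norm, dist_eq_norm]
    refine ContinuousLinearMap.opNorm_le_bound _ (by positivity) ?_
    intro φ
    have := P.ev_lip φ ht hs
    simp only [NNReal.coe_one, one_mul]
    rw [mul_comm]
    exact this
  exact this.continuousOn

lemma evD_contOn : ContinuousOn (P.evD) (univ ×ˢ Icc0 r) := by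
  unfold evD
  refine ContinuousOn.add ?_ ?_
  · have h : ContinuousOn (fun p : X × ℝ => P.evL p.2) (univ ×ˢ Icc0 r) :=
      P.evL_contOn.comp continuous_snd.continuousOn (fun q hq => hq.2)
    exact h.clm_comp continuousOn_const
  · exact ((ContinuousLinearMap.smulRightL ℝ (X × ℝ) E
      (ContinuousLinearMap.snd ℝ (X) ℝ)).continuous.comp_continuousOn P.dv_contOn)

lemma ev_contDiffOn :
    ContDiffOn ℝ 1 (fun p : X × ℝ => P.ev p.2 p.1) (univ ×ˢ Icc0 r) := by
  have := (contDiffOn_succ_iff_hasFDerivWithinAt (𝕜 := ℝ) (n := 0)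
    (f := fun p : X × ℝ => P.ev p.2 p.1) (s := univ ×ˢ Icc0 r) (by simp)).2
  rw [zero_add] at this
  refine this ?_
  intro x hx
  rw [insert_eq_of_mem hx]
  refine ⟨_, self_mem_nhdsWithin, by simp, P.evD, fun p hp => P.ev_hasFDeriv p hp.2, ?_⟩
  rw [contDiffOn_zero]; exact P.evD_contOn

end EvS

namespace Setting
variable {r : ℝ} {n kk : ℕ} {F : Type*} [NormedAddCommGroup F] [NormedSpace ℝ F]
variable (S : Setting r n kk F)

lemma neg_d_mem (k : Fin kk) {w : F} (hw : w ∈ S.W) : -(S.d k w) ∈ Icc0 r := by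
  have := S.d_mem k w hw
  exact ⟨by linarith [this.2], by linarith [this.1]⟩

lemma WupJ_open (J : Finset (Fin kk)) : IsOpen (S.WupJ J) := by
  have h : S.WupJ J = S.W ∩ ⋂ k : {k // k ∉ J}, (S.W ∩ S.d k ⁻¹' Ioi 0) := by
    ext w
    simp only [WupJ, mem_setOf_eq, mem_inter_iff, mem_iInter, mem_preimage, mem_Ioi,
      Subtype.forall]
    constructor
    · rintro ⟨h1, h2⟩; exact ⟨h1, fun k hk => ⟨h1, h2 k hk⟩⟩
    · rintro ⟨h1, h2⟩; exact ⟨h1, fun k hk => (h2 k hk).2⟩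
  rw [h]
  exact S.Wopen.inter (isOpen_iInter_of_finite fun k =>
    (S.d_smooth k).continuousOn.isOpen_inter_preimage S.Wopen isOpen_Ioi)

end Setting

/-- Abstract form of the delay system on a normed space `X`. -/
structure ASet (r : ℝ) (n kk : ℕ) (F X : Type*) [NormedAddCommGroup F] [NormedSpace ℝ F]
    [NormedAddCommGroup X] [NormedSpace ℝ X] where
  P : EvS r X (Fin n → ℝ)
  S : Setting r n kk F
  Lf : X → F
  Lf_add : ∀ φ ψ, Lf (φ + ψ) = Lf φ + Lf ψ
  Lf_smul : ∀ (c : ℝ) φ, Lf (c • φ) = c • Lf φ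
  Lf_bd : ∀ φ, ‖Lf φ‖ ≤ ‖S.L‖ * ‖φ‖

namespace ASet
variable {r : ℝ} {n kk : ℕ} {F X : Type*} [NormedAddCommGroup F] [NormedSpace ℝ F]
    [NormedAddCommGroup X] [NormedSpace ℝ X]
variable (A : ASet r n kk F X)

/-- `L` as a continuous linear map -/
def LL : X →L[ℝ] F :=
  LinearMap.mkContinuous
    { toFun := A.Lf
      map_add' := A.Lf_add
      map_smul' := A.Lf_smul } ‖A.S.L‖ A.Lf_bd

lemma LL_apply (φ : X) : A.LL φ = A.Lf φ := rfl

/-- abstract `φ̂` -/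
def hat (φ : X) : Fin kk → Fin n → ℝ := fun k => A.P.ev (-(A.S.d k (A.Lf φ))) φ
/-- abstract `U` -/
def U : Set X := {φ | A.Lf φ ∈ A.S.W ∧ A.hat φ ∈ A.S.V}
/-- abstract `f` -/
def fmap (φ : X) : Fin n → ℝ := A.S.g (A.hat φ)
/-- abstract `X_f` -/
def Xf : Set X := {φ | φ ∈ A.U ∧ A.P.dv 0 φ = A.fmap φ}
/-- abstract `U^J` -/
def UupJ (J : Finset (Fin kk)) : Set X := {φ | φ ∈ A.U ∧ A.Lf φ ∈ A.S.WupJ J}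

lemma hat_contDiffOn : ContDiffOn ℝ 1 A.hat (A.LL ⁻¹' A.S.W) := by
  rw [contDiffOn_pi]
  intro k
  have h1 : ContDiffOn ℝ 1 (fun φ : X => (φ, -(A.S.d k (A.LL φ)))) (A.LL ⁻¹' A.S.W) :=
    contDiffOn_id.prodMk
      (((A.S.d_smooth k).comp A.LL.contDiff.contDiffOn (fun _ h => h)).neg)
  exact A.P.ev_contDiffOn.comp h1 (fun φ hφ => ⟨mem_univ _, A.S.neg_d_mem k hφ⟩)

lemma U_open : IsOpen A.U := by
  have h := A.hat_contDiffOn.continuousOn.isOpen_inter_preimage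
    (A.S.Wopen.preimage A.LL.continuous) A.S.Vopen
  exact h

lemma fmap_contDiffOn : ContDiffOn ℝ 1 A.fmap A.U :=
  A.S.g_smooth.comp (A.hat_contDiffOn.mono (fun _ h => h.1)) (fun _ h => h.2)

lemma UupJ_open (J : Finset (Fin kk)) : IsOpen (A.UupJ J) :=
  A.U_open.inter ((A.S.WupJ_open J).preimage A.LL.continuous)

/-- `Df(φ)` vanishes on directions invisible to `φ̂`. -/
lemma fderiv_fmap_zero {φ ζ : X} (hφ : φ ∈ A.U) (hL : A.LL ζ = 0)
    (hev : ∀ k, A.P.ev (-(A.S.d k (A.LL φ))) ζ = 0) : fderiv ℝ A.fmap φ ζ = 0 := by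
  have hd : HasFDerivAt A.fmap (fderiv ℝ A.fmap φ) φ :=
    (((A.fmap_contDiffOn φ hφ).contDiffAt (A.U_open.mem_nhds hφ)).differentiableAt
      (by simp)).hasFDerivAt
  have hc : HasDerivAt (fun s : ℝ => φ + s • ζ) ζ 0 := by
    have := ((hasDerivAt_id (0:ℝ)).smul_const ζ).const_add φ
    simpa using this
  have h1 : HasDerivAt (A.fmap ∘ fun s : ℝ => φ + s • ζ) (fderiv ℝ A.fmap φ ζ) 0 :=
    HasFDerivAt.comp_hasDerivAt (0:ℝ) (by simpa using hd) hc
  have h2 : (A.fmap ∘ fun s : ℝ => φ + s • ζ) = fun _ => A.fmap φ := by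
    funext s
    have hLs : A.Lf (φ + s • ζ) = A.Lf φ := by
      rw [← A.LL_apply, map_add, map_smul, hL]; simp [A.LL_apply]
    simp only [Function.comp, fmap]
    congr 1
    funext k
    simp only [hat, hLs]
    rw [← A.P.evL_apply, map_add, map_smul]
    have := hev k
    rw [A.LL_apply] at this
    rw [A.P.evL_apply, A.P.evL_apply, this]; simp
  rw [h2] at h1
  exact h1.unique (hasDerivAt_const _ _)

lemma fmap_hasFDeriv {φ : X} (hφ : φ ∈ A.U) :
    HasFDerivAt A.fmap (fderiv ℝ A.fmap φ) φ :=
  (((A.fmap_contDiffOn φ hφ).contDiffAt (A.U_open.mem_nhds hφ)).differentiableAt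
      (by simp)).hasFDerivAt

/-- The tangent set of `X_f`, given a right inverse `Y` of `φ ↦ φ'(0)` annihilated by `Df`. -/
lemma tangentSet_eq {φ : X} (hφ : φ ∈ A.Xf)
    (Y : (Fin n → ℝ) →L[ℝ] X) (hY : ∀ x, A.P.dv 0 (Y x) = x)
    (hfY : ∀ x, fderiv ℝ A.fmap φ (Y x) = 0) :
    tangentSet A.Xf φ = {χ | A.P.dv 0 χ = fderiv ℝ A.fmap φ χ} := by
  have hd := A.fmap_hasFDeriv hφ.1
  ext χ
  constructor
  · rintro ⟨c, ε, hε, -, hcX, hc0, hcd⟩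
    have hn : Ioo (-ε) ε ∈ 𝓝 (0:ℝ) := Ioo_mem_nhds (by linarith) hε
    have hcd' : HasDerivAt c χ 0 := hcd.hasDerivAt hn
    have h1 : HasDerivAt (A.P.dvL 0 ∘ c) (A.P.dvL 0 χ) 0 :=
      (A.P.dvL 0).hasFDerivAt.comp_hasDerivAt _ hcd'
    have h2 : HasDerivAt (A.fmap ∘ c) (fderiv ℝ A.fmap φ χ) 0 :=
      HasFDerivAt.comp_hasDerivAt _ (by rw [hc0]; exact hd) hcd'
    have h3 : (A.fmap ∘ c) =ᶠ[𝓝 0] (A.P.dvL 0 ∘ c) := by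
      filter_upwards [hn] with s hs
      exact (hcX s hs).2.symm
    exact h1.unique (h2.congr_of_eventuallyEq h3.symm)
  · intro hχ
    have hχ : A.P.dv 0 χ = fderiv ℝ A.fmap φ χ := hχ
    let H : ℝ × (Fin n → ℝ) →L[ℝ] X :=
      (ContinuousLinearMap.fst ℝ ℝ (Fin n → ℝ)).smulRight χ +
        Y.comp (ContinuousLinearMap.snd ℝ ℝ (Fin n → ℝ))
    have hH : ∀ p, H p = p.1 • χ + Y p.2 := fun p => rfl
    let h : ℝ × (Fin n → ℝ) → X := fun p => φ + H p
    have h0 : h 0 = φ := by simp [h]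
    have hsm : ContDiff ℝ 1 h := contDiff_const.add H.contDiff
    have hder : HasFDerivAt h H 0 := H.hasFDerivAt.const_add φ
    let G : ℝ × (Fin n → ℝ) → ℝ × (Fin n → ℝ) := fun p => (p.1, A.P.dvL 0 (h p) - A.fmap (h p))
    have hfc : ContDiffAt ℝ 1 A.fmap (h 0) := by
      rw [h0]; exact (A.fmap_contDiffOn φ hφ.1).contDiffAt (A.U_open.mem_nhds hφ.1)
    have hG : ContDiffAt ℝ 1 G 0 :=
      contDiffAt_fst.prodMk (((A.P.dvL 0).contDiff.comp hsm).contDiffAt.sub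
        (hfc.comp 0 hsm.contDiffAt))
    have hGd : HasFDerivAt G ((ContinuousLinearEquiv.refl ℝ (ℝ × (Fin n → ℝ))) :
        ℝ × (Fin n → ℝ) →L[ℝ] ℝ × (Fin n → ℝ)) 0 := by
      have e1 : HasFDerivAt (fun p => A.P.dvL 0 (h p))
          ((A.P.dvL 0).comp H) 0 :=
        (A.P.dvL 0).hasFDerivAt.comp 0 hder
      have e2 : HasFDerivAt (fun p => A.fmap (h p)) ((fderiv ℝ A.fmap φ).comp H) 0 :=
        HasFDerivAt.comp (g := A.fmap) 0 (by rw [h0]; exact hd) hder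
      have e3 := (hasFDerivAt_fst (𝕜 := ℝ) (p := (0 : ℝ × (Fin n → ℝ)))).prodMk (e1.sub e2)
      refine e3.congr_fderiv ?_
      refine ContinuousLinearMap.ext fun p => ?_
      refine Prod.ext rfl ?_
      show A.P.dvL 0 (H p) - fderiv ℝ A.fmap φ (H p) = p.2
      rw [hH, map_add, map_add, map_smul, map_smul, hfY, A.P.dvL_apply, A.P.dvL_apply, hY, hχ]
      simp
    have hG0 : G 0 = 0 := by
      refine Prod.ext rfl ?_
      show A.P.dvL 0 (h 0) - A.fmap (h 0) = 0
      rw [h0, A.P.dvL_apply, hφ.2, sub_self]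
    let I : ℝ × (Fin n → ℝ) → ℝ × (Fin n → ℝ) := hG.localInverse hGd one_ne_zero
    have hI : ContDiffAt ℝ 1 I 0 := by
      have := hG.to_localInverse hGd one_ne_zero
      rwa [hG0] at this
    have hst : HasStrictFDerivAt G ((ContinuousLinearEquiv.refl ℝ (ℝ × (Fin n → ℝ))) :
        ℝ × (Fin n → ℝ) →L[ℝ] ℝ × (Fin n → ℝ)) 0 := hG.hasStrictFDerivAt' hGd one_ne_zero
    have hI0 : I 0 = 0 := by
      have := hst.localInverse_apply_image
      rwa [hG0] at this
    have hId : HasFDerivAt I (ContinuousLinearMap.id ℝ (ℝ × (Fin n → ℝ))) 0 := by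
      have := hst.to_localInverse.hasFDerivAt
      rw [hG0] at this
      exact this
    have hGI : ∀ᶠ p in 𝓝 (0 : ℝ × (Fin n → ℝ)), G (I p) = p := by
      have := hst.eventually_right_inverse
      rwa [hG0] at this
    let j : ℝ → ℝ × (Fin n → ℝ) := fun s => (s, 0)
    have hj0 : j 0 = 0 := rfl
    have hjs : ContDiff ℝ 1 j := contDiff_id.prodMk contDiff_const
    have hjd : HasDerivAt j (1, 0) 0 := (hasDerivAt_id (0:ℝ)).prodMk (hasDerivAt_const _ _)
    let c : ℝ → X := fun s => h (I (j s))
    have hc0 : c 0 = φ := by simp only [c, hj0, hI0, h0]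
    have hcs : ContDiffAt ℝ 1 c 0 := by
      have : ContDiffAt ℝ 1 (I ∘ j) 0 := ContDiffAt.comp 0 (by rw [hj0]; exact hI) hjs.contDiffAt
      exact hsm.contDiffAt.comp 0 this
    have hcd : HasDerivAt c χ 0 := by
      have e1 : HasDerivAt (I ∘ j) (1, 0) 0 :=
        HasFDerivAt.comp_hasDerivAt (l' := ContinuousLinearMap.id ℝ (ℝ × (Fin n → ℝ)))
          (0:ℝ) (by rw [hj0]; exact hId) hjd
      have e2 : HasDerivAt (h ∘ (I ∘ j)) (H (1, 0)) 0 :=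
        HasFDerivAt.comp_hasDerivAt (0:ℝ) (by simp only [Function.comp, hj0, hI0]; exact hder) e1
      have : H (1, 0) = χ := by rw [hH]; simp
      rw [this] at e2
      exact e2
    have hcU : ∀ᶠ s in 𝓝 (0:ℝ), c s ∈ A.U :=
      hcs.continuousAt.eventually_mem (by rw [hc0]; exact A.U_open.mem_nhds hφ.1)
    have hcG : ∀ᶠ s in 𝓝 (0:ℝ), G (I (j s)) = j s := by
      have : Tendsto j (𝓝 0) (𝓝 0) := hjs.continuous.tendsto 0
      exact this.eventually hGI
    have hcC : ∀ᶠ s in 𝓝 (0:ℝ), ContDiffAt ℝ 1 c s := hcs.eventually (by simp)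
    obtain ⟨ε, hε, hb⟩ := Metric.eventually_nhds_iff_ball.1 (hcU.and (hcG.and hcC))
    rw [Real.ball_eq_Ioo] at hb
    simp only [zero_sub, zero_add] at hb
    refine ⟨c, ε, hε, fun s hs => (hb s hs).2.2.contDiffWithinAt, fun s hs => ⟨(hb s hs).1, ?_⟩,
      hc0, hcd.hasDerivWithinAt⟩
    have := congrArg Prod.snd (hb s hs).2.1
    exact sub_eq_zero.1 this

lemma Lf_hat_congr {φ ψ : X} (hL : A.Lf φ = A.Lf ψ)
    (hev : ∀ k, A.P.ev (-(A.S.d k (A.Lf ψ))) φ = A.P.ev (-(A.S.d k (A.Lf ψ))) ψ) :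
    A.fmap φ = A.fmap ψ := by
  simp only [fmap]
  congr 1
  funext k
  simp only [hat, hL, hev k]

/-- `Y·x` -/
def Yx (Y : Fin n → F → X) (w : F) : (Fin n → ℝ) →L[ℝ] X :=
  ∑ ν, (ContinuousLinearMap.proj (R := ℝ) (φ := fun _ : Fin n => ℝ) ν).smulRight (Y ν w)

lemma Yx_apply (Y : Fin n → F → X) (w : F) (x : Fin n → ℝ) : Yx Y w x = ∑ ν, x ν • Y ν w := by
  simp [Yx]

theorem abstract_main (hr : 0 < r) (J : Finset (Fin kk)) (Y : Fin n → F → X)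
    (hY_smooth : ∀ ν, ContDiffOn ℝ 1 (Y ν) (A.S.WupJ J))
    (hY0 : ∀ ν, ∀ w ∈ A.S.WupJ J, A.P.ev 0 (Y ν w) = 0)
    (hY1 : ∀ ν, ∀ w ∈ A.S.WupJ J, A.P.dv 0 (Y ν w) = Pi.single ν 1)
    (hYL : ∀ ν, ∀ w ∈ A.S.WupJ J, A.Lf (Y ν w) = 0)
    (hYvan : ∀ ν, ∀ w ∈ A.S.WupJ J, ∀ k ∉ J, ∀ t ∈ Set.Icc (-r) (-(A.S.d k w)),
      A.P.ev t (Y ν w) = 0)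
    (R : X → X) (hR : ∀ φ, R φ = φ - ∑ ν, A.P.dv 0 φ ν • Y ν (A.Lf φ))
    (Z : Set X) (hZ : Z = {φ | φ ∈ A.Xf ∧ A.Lf φ ∈ A.S.WJ J})
    (X0 : Set X) (hX0 : X0 = {φ | A.P.dv 0 φ = 0}) :
    Set.InjOn R Z ∧
    ∀ φ ∈ Z,
      Set.BijOn (fderivWithin ℝ R (A.UupJ J) φ) (tangentSet A.Xf φ) X0 ∧
      ∃ σ : X → X, ContinuousOn σ X0 ∧
        Set.InvOn σ (fderivWithin ℝ R (A.UupJ J) φ) (tangentSet A.Xf φ) X0 := by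
  subst hZ hX0
  have hWsub : ∀ w ∈ A.S.WJ J, w ∈ A.S.WupJ J := fun w hw => ⟨hw.1, hw.2.2⟩
  have hR' : ∀ φ, R φ = φ - Yx Y (A.LL φ) (A.P.dvL 0 φ) := by
    intro φ; rw [hR, Yx_apply]; rfl
  -- properties of `Y(w)x`
  have qL : ∀ w ∈ A.S.WupJ J, ∀ x, A.LL (Yx Y w x) = 0 := by
    intro w hw x
    rw [Yx_apply, map_sum]
    refine Finset.sum_eq_zero fun ν _ => ?_
    rw [map_smul, LL_apply, hYL ν w hw, smul_zero]
  have qdv : ∀ w ∈ A.S.WupJ J, ∀ x, A.P.dvL 0 (Yx Y w x) = x := by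
    intro w hw x
    rw [Yx_apply, map_sum]
    have : ∀ ν, A.P.dvL 0 (x ν • Y ν w) = Pi.single ν (x ν) := by
      intro ν
      rw [map_smul, EvS.dvL_apply, hY1 ν w hw, ← Pi.single_smul', smul_eq_mul, mul_one]
    simp only [this]
    exact Finset.univ_sum_single x
  have qev : ∀ w ∈ A.S.WupJ J, ∀ x t, (∀ ν, A.P.ev t (Y ν w) = 0) → A.P.evL t (Yx Y w x) = 0 := by
    intro w hw x t ht
    rw [Yx_apply, map_sum]
    refine Finset.sum_eq_zero fun ν _ => ?_
    rw [map_smul, EvS.evL_apply, ht, smul_zero]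
  have qev0 : ∀ w ∈ A.S.WupJ J, ∀ x, A.P.evL 0 (Yx Y w x) = 0 :=
    fun w hw x => qev w hw x 0 (fun ν => hY0 ν w hw)
  have qvan : ∀ w ∈ A.S.WupJ J, ∀ x, ∀ k ∉ J, ∀ t ∈ Set.Icc (-r) (-(A.S.d k w)),
      A.P.evL t (Yx Y w x) = 0 :=
    fun w hw x k hk t ht => qev w hw x t (fun ν => hYvan ν w hw k hk t ht)
  have qevd : ∀ w ∈ A.S.WJ J, ∀ x k, A.P.evL (-(A.S.d k w)) (Yx Y w x) = 0 := by
    intro w hw x k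
    by_cases hk : k ∈ J
    · rw [hw.2.1 k hk, neg_zero]; exact qev0 w (hWsub w hw) x
    · exact qvan w (hWsub w hw) x k hk _ ⟨(A.S.neg_d_mem k hw.1).1, le_rfl⟩
  have LR : ∀ φ, A.LL φ ∈ A.S.WupJ J → A.LL (R φ) = A.LL φ := by
    intro φ hφ; rw [hR', map_sub, qL _ hφ, sub_zero]
  constructor
  · rintro φ ⟨⟨hφU, hφf⟩, hφW⟩ ψ ⟨⟨hψU, hψf⟩, hψW⟩ hEq
    have eL : A.LL φ = A.LL ψ := by
      rw [← LR φ (hWsub _ hφW), ← LR ψ (hWsub _ hψW), hEq]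
    have ef : A.fmap φ = A.fmap ψ := by
      refine A.Lf_hat_congr eL fun k => ?_
      have h1 : A.P.evL (-(A.S.d k (A.Lf ψ))) (R φ) = A.P.evL (-(A.S.d k (A.Lf ψ))) φ := by
        rw [hR', map_sub, eL, LL_apply, qevd _ hψW, sub_zero]
      have h2 : A.P.evL (-(A.S.d k (A.Lf ψ))) (R ψ) = A.P.evL (-(A.S.d k (A.Lf ψ))) ψ := by
        rw [hR', map_sub, LL_apply, qevd _ hψW, sub_zero]
      rw [hEq, h2] at h1
      exact h1.symm
    have ed : A.P.dvL 0 φ = A.P.dvL 0 ψ := by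
      rw [EvS.dvL_apply, EvS.dvL_apply, hφf, hψf, ef]
    rw [hR', hR', eL, ed] at hEq
    exact sub_left_inj.1 hEq
  · rintro φ ⟨hφX, hφW⟩
    have hφU := hφX.1
    set w : F := A.LL φ with hw
    have hwJ : w ∈ A.S.WJ J := hφW
    have hwup : w ∈ A.S.WupJ J := hWsub w hwJ
    have hwn : A.S.WupJ J ∈ 𝓝 w := (A.S.WupJ_open J).mem_nhds hwup
    set D := fderiv ℝ A.fmap φ with hD
    set x0 := A.P.dvL 0 φ with hx0
    -- derivative of `w ↦ Y(w)x0`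
    let B : F →L[ℝ] X := ∑ ν, x0 ν • fderiv ℝ (Y ν) w
    have hYd : ∀ ν, HasFDerivAt (Y ν) (fderiv ℝ (Y ν) w) w := fun ν =>
      (((hY_smooth ν w hwup).contDiffAt hwn).differentiableAt (by simp)).hasFDerivAt
    have hB : HasFDerivAt (fun w' => Yx Y w' x0) B w := by
      have : HasFDerivAt (fun w' => ∑ ν, x0 ν • Y ν w') B w :=
        HasFDerivAt.fun_sum fun ν _ => (hYd ν).const_smul (x0 ν)
      simpa only [Yx_apply] using this
    have BL : ∀ ω, A.LL (B ω) = 0 := by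
      intro ω
      have h1 : HasFDerivAt (fun w' => A.LL (Yx Y w' x0)) (A.LL.comp B) w :=
        A.LL.hasFDerivAt.comp w hB
      have h2 : (fun w' => A.LL (Yx Y w' x0)) =ᶠ[𝓝 w] fun _ => 0 := by
        filter_upwards [hwn] with w' hw' using qL w' hw' x0
      have h3 := h1.unique ((hasFDerivAt_const (0:F) w).congr_of_eventuallyEq h2)
      exact congrArg (fun T : F →L[ℝ] F => T ω) h3
    have Bdv : ∀ ω, A.P.dvL 0 (B ω) = 0 := by
      intro ω
      have h1 : HasFDerivAt (fun w' => A.P.dvL 0 (Yx Y w' x0)) ((A.P.dvL 0).comp B) w :=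
        (A.P.dvL 0).hasFDerivAt.comp w hB
      have h2 : (fun w' => A.P.dvL 0 (Yx Y w' x0)) =ᶠ[𝓝 w] fun _ => x0 := by
        filter_upwards [hwn] with w' hw' using qdv w' hw' x0
      have h3 := h1.unique ((hasFDerivAt_const x0 w).congr_of_eventuallyEq h2)
      exact congrArg (fun T : F →L[ℝ] (Fin n → ℝ) => T ω) h3
    have Bev : ∀ ω k, A.P.evL (-(A.S.d k w)) (B ω) = 0 := by
      intro ω k
      by_cases hk : k ∈ J
      · rw [hwJ.2.1 k hk, neg_zero]
        have h1 : HasFDerivAt (fun w' => A.P.evL 0 (Yx Y w' x0)) ((A.P.evL 0).comp B) w :=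
          (A.P.evL 0).hasFDerivAt.comp w hB
        have h2 : (fun w' => A.P.evL 0 (Yx Y w' x0)) =ᶠ[𝓝 w] fun _ => 0 := by
          filter_upwards [hwn] with w' hw' using qev0 w' hw' x0
        have h3 := h1.unique ((hasFDerivAt_const (0 : Fin n → ℝ) w).congr_of_eventuallyEq h2)
        exact congrArg (fun T : F →L[ℝ] (Fin n → ℝ) => T ω) h3
      · have hWn : A.S.W ∈ 𝓝 w := A.S.Wopen.mem_nhds hwJ.1
        have hdk : HasFDerivAt (A.S.d k) (fderiv ℝ (A.S.d k) w) w :=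
          ((((A.S.d_smooth k) w hwJ.1).contDiffAt hWn).differentiableAt (by simp)).hasFDerivAt
        have hmem := A.S.neg_d_mem k hwJ.1
        have h0 : HasFDerivWithinAt (fun w' => (Yx Y w' x0, -(A.S.d k w')))
            (B.prod (-(fderiv ℝ (A.S.d k) w))) (A.S.WupJ J) w :=
          (hB.prodMk hdk.neg).hasFDerivWithinAt
        have h1 : HasFDerivWithinAt (fun w' => A.P.ev (-(A.S.d k w')) (Yx Y w' x0))
            ((A.P.evD (Yx Y w x0, -(A.S.d k w))).comp (B.prod (-(fderiv ℝ (A.S.d k) w))))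
            (A.S.WupJ J) w :=
          HasFDerivWithinAt.comp (g := fun p : X × ℝ => A.P.ev p.2 p.1) (t := univ ×ˢ Icc0 r) w
            (A.P.ev_hasFDeriv (Yx Y w x0, -(A.S.d k w)) hmem) h0
            (fun w' hw' => ⟨mem_univ _, A.S.neg_d_mem k hw'.1⟩)
        have h1' := h1.hasFDerivAt hwn
        have h2 : (fun w' => A.P.ev (-(A.S.d k w')) (Yx Y w' x0)) =ᶠ[𝓝 w] fun _ => 0 := by
          filter_upwards [hwn] with w' hw'
          exact qvan w' hw' x0 k hk _ ⟨(A.S.neg_d_mem k hw'.1).1, le_rfl⟩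
        have h3 := h1'.unique ((hasFDerivAt_const (0 : Fin n → ℝ) w).congr_of_eventuallyEq h2)
        have h4 := congrArg (fun T : F →L[ℝ] (Fin n → ℝ) => T ω) h3
        have h5 : A.P.ev (-(A.S.d k w)) (B ω) +
            (-(fderiv ℝ (A.S.d k) w ω)) • A.P.dv (-(A.S.d k w)) (Yx Y w x0) = 0 := h4
        have h6 : (-(fderiv ℝ (A.S.d k) w ω)) • A.P.dv (-(A.S.d k w)) (Yx Y w x0) = 0 := by
          rcases hmem.1.eq_or_lt with he | hlt
          · have hmax : IsLocalMax (A.S.d k) w := by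
              filter_upwards [hWn] with w' hw'
              have := (A.S.d_mem k w' hw').2
              linarith
            rw [hmax.fderiv_eq_zero]; simp
          · have e1 := (A.P.hder (Yx Y w x0) _ hmem).mono
              (Icc_subset_Icc_right hmem.2 : Icc (-r) (-(A.S.d k w)) ⊆ Icc0 r)
            have e2 : HasDerivWithinAt (fun s => A.P.ev s (Yx Y w x0)) 0
                (Icc (-r) (-(A.S.d k w))) (-(A.S.d k w)) :=
              (hasDerivWithinAt_const _ _ (0 : Fin n → ℝ)).congr_of_mem
                (fun t ht => qvan w hwup x0 k hk t ht) ⟨hlt.le, le_rfl⟩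
            have e3 := (uniqueDiffOn_Icc hlt (-(A.S.d k w)) ⟨hlt.le, le_rfl⟩).eq_deriv _ e1 e2
            rw [e3, smul_zero]
        rw [h6, add_zero] at h5
        exact h5
    -- derivative of `R`
    let T : X →L[ℝ] X := ContinuousLinearMap.id ℝ X -
      ((Yx Y w).comp (A.P.dvL 0) + B.comp A.LL)
    have hT : ∀ χ, T χ = χ - (Yx Y w (A.P.dvL 0 χ) + B (A.LL χ)) := fun χ => rfl
    have hRd : HasFDerivAt R T φ := by
      have e : ∀ ν, HasFDerivAt (fun ψ => (A.P.dvL 0 ψ) ν • Y ν (A.LL ψ))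
          (x0 ν • (fderiv ℝ (Y ν) w).comp A.LL +
            ((ContinuousLinearMap.proj (R := ℝ) (φ := fun _ : Fin n => ℝ) ν).comp
              (A.P.dvL 0)).smulRight (Y ν w)) φ := by
        intro ν
        have e1 : HasFDerivAt (fun ψ => (A.P.dvL 0 ψ) ν)
            ((ContinuousLinearMap.proj (R := ℝ) (φ := fun _ : Fin n => ℝ) ν).comp
              (A.P.dvL 0)) φ :=
          ((ContinuousLinearMap.proj (R := ℝ) (φ := fun _ : Fin n => ℝ) ν).comp
              (A.P.dvL 0)).hasFDerivAt
        have e2 : HasFDerivAt (fun ψ => Y ν (A.LL ψ)) ((fderiv ℝ (Y ν) w).comp A.LL) φ :=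
          (hYd ν).comp φ A.LL.hasFDerivAt
        exact e1.smul e2
      have e3 := (hasFDerivAt_id φ).sub
        (HasFDerivAt.fun_sum (u := Finset.univ) fun ν _ => e ν)
      have e4 : R = (id - fun ψ => ∑ ν, (A.P.dvL 0 ψ) ν • Y ν (A.LL ψ)) := by
        funext ψ; exact hR ψ
      rw [e4]
      refine e3.congr_fderiv ?_
      refine ContinuousLinearMap.ext fun χ => ?_
      rw [hT, Yx_apply]
      simp [B, Finset.sum_add_distrib, add_comm]
    have hfd : fderivWithin ℝ R (A.UupJ J) φ = T := by
      rw [fderivWithin_of_isOpen (A.UupJ_open J) ⟨hφU, hwup⟩, hRd.fderiv]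
    rw [hfd]
    -- `Df` kills the relevant directions
    have DY : ∀ x, D (Yx Y w x) = 0 := fun x =>
      A.fderiv_fmap_zero hφU (qL w hwup x) (fun k => qevd w hwJ x k)
    have DB : ∀ ω, D (B ω) = 0 := fun ω =>
      A.fderiv_fmap_zero hφU (BL ω) (fun k => Bev ω k)
    rw [A.tangentSet_eq hφX (Yx Y w) (qdv w hwup) DY]
    let σ : X →L[ℝ] X := ContinuousLinearMap.id ℝ X + ((Yx Y w).comp D + B.comp A.LL)
    have hσ : ∀ η, σ η = η + (Yx Y w (D η) + B (A.LL η)) := fun η => rfl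
    have LT : ∀ χ, A.LL (T χ) = A.LL χ := by
      intro χ; rw [hT, map_sub, map_add, qL w hwup, BL]; simp
    have DT : ∀ χ, D (T χ) = D χ := by
      intro χ; rw [hT, map_sub, map_add, DY, DB]; simp
    have Lσ : ∀ χ, A.LL (σ χ) = A.LL χ := by
      intro χ; rw [hσ, map_add, map_add, qL w hwup, BL]; simp
    have Dσ : ∀ χ, D (σ χ) = D χ := by
      intro χ; rw [hσ, map_add, map_add, DY, DB]; simp
    have dσ : ∀ η, A.P.dvL 0 η = 0 → A.P.dvL 0 (σ η) = D η := by
      intro η hη; rw [hσ, map_add, map_add, qdv w hwup, Bdv, hη]; simp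
    have dT : ∀ χ, A.P.dvL 0 (T χ) = 0 := by
      intro χ; rw [hT, map_sub, map_add, qdv w hwup, Bdv]; simp
    have hinv : Set.InvOn σ T {χ | A.P.dv 0 χ = D χ} {χ | A.P.dv 0 χ = 0} := by
      constructor
      · intro χ hχ
        have hχ : A.P.dvL 0 χ = D χ := hχ
        rw [hσ, DT, LT, hT, hχ]; abel
      · intro η hη
        rw [hT, Lσ, dσ η hη, hσ]; abel
    refine ⟨hinv.bijOn (fun χ _ => dT χ) (fun η hη => ?_), σ, σ.continuous.continuousOn, hinv⟩
    show A.P.dvL 0 (σ η) = D (σ η)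
    rw [Dσ, dσ η hη]

end ASet

section concrete

lemma contDiffOn_of_bdd_lin {X1 X2 G : Type*} [NormedAddCommGroup X1] [NormedSpace ℝ X1]
    [NormedAddCommGroup X2] [NormedSpace ℝ X2] [NormedAddCommGroup G] [NormedSpace ℝ G]
    (T : X1 → X2) (hadd : ∀ x y, T (x + y) = T x + T y)
    (hsmul : ∀ (c : ℝ) x, T (c • x) = c • T x) (hbd : ∀ x, ‖T x‖ ≤ ‖x‖)
    {y : G → X1} {s : Set G} (hy : ContDiffOn ℝ 1 y s) :
    ContDiffOn ℝ 1 (fun w => T (y w)) s := by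
  let TL : X1 →L[ℝ] X2 := LinearMap.mkContinuous
    { toFun := T, map_add' := hadd, map_smul' := hsmul } 1
    (by intro x; rw [one_mul]; exact hbd x)
  exact TL.contDiff.comp_contDiffOn hy

section ev
variable {r : ℝ} {E : Type*} [NormedAddCommGroup E] [NormedSpace ℝ E]

lemma extFun_of_mem (φ : C(Icc0 r, E)) {t : ℝ} (h : t ∈ Icc0 r) : extFun φ t = φ ⟨t, h⟩ := by
  simp only [extFun, dif_pos h]

lemma norm_extFun_le (φ : C(Icc0 r, E)) (t : ℝ) : ‖extFun φ t‖ ≤ ‖φ‖ := by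
  by_cases h : t ∈ Icc0 r
  · rw [extFun_of_mem φ h]; exact φ.norm_coe_le_norm _
  · simp [extFun, h]

lemma C1_norm_fst_le (φ : C1 r E) : ‖φ.1.1‖ ≤ ‖φ‖ := norm_fst_le φ.1

lemma C1_norm_snd_le (φ : C1 r E) : ‖φ.1.2‖ ≤ ‖φ‖ := norm_snd_le φ.1

lemma extFun_contOn (φ : C(Icc0 r, E)) : ContinuousOn (extFun φ) (Icc0 r) := by
  rw [continuousOn_iff_continuous_restrict]
  convert φ.continuous using 1
  funext q
  exact extFun_of_mem φ q.2

/-- The concrete evaluation structure on `C1`. -/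
def evS (r : ℝ) (E : Type*) [NormedAddCommGroup E] [NormedSpace ℝ E] : EvS r (C1 r E) E where
  ev t φ := evC φ t
  dv t φ := dvC φ t
  ev_add t φ ψ := congrFun (extFun_add φ.1.1 ψ.1.1) t
  ev_smul t c φ := congrFun (extFun_smul c φ.1.1) t
  dv_add t φ ψ := congrFun (extFun_add φ.1.2 ψ.1.2) t
  dv_smul t c φ := congrFun (extFun_smul c φ.1.2) t
  ev_bd t φ := (norm_extFun_le _ _).trans (C1_norm_fst_le φ)
  dv_bd t φ := (norm_extFun_le _ _).trans (C1_norm_snd_le φ)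
  hder φ := φ.2
  dv_cont φ := extFun_contOn φ.1.2

end ev

/-- The concrete abstract setting. -/
def aSet {r : ℝ} {n kk : ℕ} {F : Type*} [NormedAddCommGroup F] [NormedSpace ℝ F]
    (S : Setting r n kk F) : ASet r n kk F (C1 r (Fin n → ℝ)) where
  P := evS r (Fin n → ℝ)
  S := S
  Lf := S.Lof
  Lf_add φ ψ := S.L.map_add φ.1.1 ψ.1.1
  Lf_smul c φ := S.L.map_smul c φ.1.1
  Lf_bd φ := (S.L.le_opNorm φ.1.1).trans
    (mul_le_mul_of_nonneg_left (C1_norm_fst_le φ) (norm_nonneg _))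

section single
variable {r : ℝ} {n : ℕ}

lemma sCLM_apply (ν : Fin n) (x : ℝ) (j : Fin n) :
    sCLM n ν x j = if j = ν then x else 0 := by
  unfold sCLM
  by_cases h : j = ν <;> simp [h]

lemma norm_sCLM_le (ν : Fin n) (x : ℝ) : ‖sCLM n ν x‖ ≤ ‖x‖ := by
  rw [pi_norm_le_iff_of_nonneg (norm_nonneg _)]
  intro j
  rw [sCLM_apply]; split_ifs <;> simp

lemma norm_CMsingle_le (ν : Fin n) (φ : C(Icc0 r, ℝ)) : ‖CMsingle ν φ‖ ≤ ‖φ‖ := by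
  rw [ContinuousMap.norm_le _ (norm_nonneg _)]
  intro t
  exact (norm_sCLM_le ν _).trans (φ.norm_coe_le_norm t)

lemma singleC1_add (ν : Fin n) (φ ψ : C1 r ℝ) :
    singleC1 ν (φ + ψ) = singleC1 ν φ + singleC1 ν ψ := by
  refine Subtype.ext (Prod.ext ?_ ?_) <;>
  · refine ContinuousMap.ext fun t => ?_
    exact (sCLM n ν).map_add _ _

lemma singleC1_smul (ν : Fin n) (c : ℝ) (φ : C1 r ℝ) :
    singleC1 ν (c • φ) = c • singleC1 ν φ := by
  refine Subtype.ext (Prod.ext ?_ ?_) <;>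
  · refine ContinuousMap.ext fun t => ?_
    exact (sCLM n ν).map_smul _ _

lemma norm_singleC1_le (ν : Fin n) (φ : C1 r ℝ) : ‖singleC1 ν φ‖ ≤ ‖φ‖ :=
  max_le ((norm_CMsingle_le ν _).trans (C1_norm_fst_le φ))
        ((norm_CMsingle_le ν _).trans (C1_norm_snd_le φ))

lemma evC_singleC1 (ν : Fin n) (φ : C1 r ℝ) (t : ℝ) :
    evC (singleC1 ν φ) t = sCLM n ν (evC φ t) := extFun_CMsingle ν _ t

lemma dvC_singleC1 (ν : Fin n) (φ : C1 r ℝ) (t : ℝ) :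
    dvC (singleC1 ν φ) t = sCLM n ν (dvC φ t) := extFun_CMsingle ν _ t

end single

end concrete

end Helpers

variable {r : ℝ} {n kk : ℕ} {F : Type*} [NormedAddCommGroup F] [NormedSpace ℝ F]
  [FiniteDimensional ℝ F]

/-- Proposition 4.4: `R^J` is injective on `X_{fJ}`, and for `φ ∈ X_{fJ}` the derivative
`DR^J(φ)` defines a (topological) isomorphism from `T_φX_f` onto `X₀`. -/
theorem statement12 (hr : 0 < r) (S : Setting r n kk F)
    (J : Finset (Fin kk)) (hJ : J ≠ Finset.univ) (hUJ : (S.UJ J).Nonempty)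
    (y : Fin n → F → C1 r ℝ)
    (hy_smooth : ∀ ν, ContDiffOn ℝ 1 (y ν) (S.WupJ J))
    (hy0 : ∀ ν, ∀ w ∈ S.WupJ J, evC (y ν w) 0 = 0)
    (hy1 : ∀ ν, ∀ w ∈ S.WupJ J, dvC (y ν w) 0 = 1)
    (hyL : ∀ ν, ∀ w ∈ S.WupJ J, S.L (singleC1 ν (y ν w)).1.1 = 0)
    (hyvan : ∀ ν, ∀ w ∈ S.WupJ J, ∀ k ∉ J, ∀ t ∈ Set.Icc (-r) (-(S.d k w)),
      evC (y ν w) t = 0) :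
    Set.InjOn (S.RJmap y) (S.XfJ J) ∧
    ∀ φ ∈ S.XfJ J,
      Set.BijOn (fderivWithin ℝ (S.RJmap y) (S.UupJ J) φ) (tangentSet S.Xf φ)
        (X0sub r n : Set (C1 r (Fin n → ℝ))) ∧
      ∃ σ : C1 r (Fin n → ℝ) → C1 r (Fin n → ℝ),
        ContinuousOn σ (X0sub r n : Set (C1 r (Fin n → ℝ))) ∧
        Set.InvOn σ (fderivWithin ℝ (S.RJmap y) (S.UupJ J) φ) (tangentSet S.Xf φ)
          (X0sub r n : Set (C1 r (Fin n → ℝ))) := by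
  exact (aSet S).abstract_main hr J (fun ν w => singleC1 ν (y ν w))
    (fun ν => contDiffOn_of_bdd_lin (X1 := C1 r ℝ) (X2 := C1 r (Fin n → ℝ)) (singleC1 ν)
      (singleC1_add ν) (singleC1_smul ν)
      (norm_singleC1_le ν) (hy_smooth ν))
    (fun ν w hw => by
      show evC (singleC1 ν (y ν w)) 0 = 0
      rw [evC_singleC1, hy0 ν w hw, map_zero])
    (fun ν w hw => by
      show dvC (singleC1 ν (y ν w)) 0 = Pi.single ν 1
      rw [dvC_singleC1, hy1 ν w hw]
      funext j
      rw [sCLM_apply, Pi.single_apply])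
    (fun ν w hw => hyL ν w hw)
    (fun ν w hw k hk t ht => by
      show evC (singleC1 ν (y ν w)) t = 0
      rw [evC_singleC1, hyvan ν w hw k hk t ht, map_zero])
    (S.RJmap y) (fun φ => rfl)
    (S.XfJ J) (by
      ext φ
      exact ⟨fun h => ⟨h.1, h.2.2⟩, fun h => ⟨h.1, h.1.1, h.2⟩⟩)
    (X0sub r n : Set (C1 r (Fin n → ℝ))) rfl
end
end
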